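/- For every k ∈ ℕ: (a) the set {β ∈ (1,2] : 𝐔_β contains a sequence of smallest period k} equals the half-open interval (β_k, 2]; and (b) if k ≥ 2, then the quasi-greedy β_k-expansion of 1 is periodic with period k, i.e. δ_{i+k}(β_k) = δ_i(β_k) for all i ≥ 1. -/

import Mathlib

open Filter Set

noncomputable section

namespace FatSierpinski

/-- The digit set Ω = {(0,0),(1,0),(0,1)} ⊆ ℝ². -/
def OmegaR : Set (ℝ × ℝ) := {(0, 0), (1, 0), (0, 1)}

/-- The fat Sierpinski gasket `S_β` (sequences are 0-indexed: `d i` is the digit d_{i+1}). -/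
def Sfat (β : ℝ) : Set (ℝ × ℝ) :=
  {x | ∃ d : ℕ → ℝ × ℝ, (∀ i, d i ∈ OmegaR) ∧ x = ∑' i : ℕ, (β ^ (i + 1))⁻¹ • d i}

/-- The convex hull `Δ_β` of `S_β`. -/
def Delta (β : ℝ) : Set (ℝ × ℝ) := convexHull ℝ (Sfat β)

/-- The map `f_d(x) = (x + d)/β`. -/
def fmap (β : ℝ) (d : ℝ × ℝ) (x : ℝ × ℝ) : ℝ × ℝ := β⁻¹ • (x + d)

/-- The overlap region `O_β = ⋃_{c ≠ d ∈ Ω} f_c(Δ_β) ∩ f_d(Δ_β)`. -/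
def Ofat (β : ℝ) : Set (ℝ × ℝ) :=
  ⋃ c ∈ OmegaR, ⋃ d ∈ OmegaR, ⋃ (_ : c ≠ d), (fmap β c '' Delta β) ∩ (fmap β d '' Delta β)

/-- The univoque set of codings `𝐔_β`. -/
def Ufat (β : ℝ) : Set (ℕ → ℝ × ℝ) :=
  {d | (∀ i, d i ∈ OmegaR) ∧
    ∀ n : ℕ, (∑' i : ℕ, (β ^ (i + 1))⁻¹ • d (n + i)) ∉ Ofat β}

/-- `d` has smallest period `k`. -/
def SmallestPeriod {α : Type*} (d : ℕ → α) (k : ℕ) : Prop :=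
  0 < k ∧ (∀ i, d (i + k) = d i) ∧ ∀ j, 0 < j → j < k → ∃ i, d (i + j) ≠ d i

/-- The critical base `β_k`. -/
def betaK (k : ℕ) : ℝ :=
  sInf {β : ℝ | β ∈ Set.Ioc (1 : ℝ) 2 ∧ ∃ d ∈ Ufat β, SmallestPeriod d k}

/-- Strict lexicographic order on sequences. -/
def seqLT {α : Type*} [Preorder α] (a b : ℕ → α) : Prop :=
  ∃ n, (∀ i < n, a i = b i) ∧ a n < b n

/-- Weak lexicographic order on sequences. -/
def seqLE {α : Type*} [Preorder α] (a b : ℕ → α) : Prop :=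
  seqLT a b ∨ a = b

/-- `a` is a 0-1 sequence. -/
def IsBinary (a : ℕ → ℕ) : Prop := ∀ i, a i ≤ 1

/-- `a` does not end with `0^∞`. -/
def NotEndInZeros (a : ℕ → ℕ) : Prop := ∀ N, ∃ i, N ≤ i ∧ a i ≠ 0

/-- `∑_{i=1}^∞ a_i β^{-i} = 1` (0-indexed: `a i` is a_{i+1}). -/
def SumsToOne (β : ℝ) (a : ℕ → ℕ) : Prop :=
  ∑' i : ℕ, (a i : ℝ) / β ^ (i + 1) = 1

/-- `a` is the quasi-greedy β-expansion of 1: the lexicographically largest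
binary sequence not ending in `0^∞` whose value in base β is 1. -/
def IsQuasiGreedy (β : ℝ) (a : ℕ → ℕ) : Prop :=
  IsBinary a ∧ NotEndInZeros a ∧ SumsToOne β a ∧
    ∀ b : ℕ → ℕ, IsBinary b → NotEndInZeros b → SumsToOne β b → seqLE b a

/-- `w⁺`: replace the final digit 0 of a block by 1. -/
def plusBlock (w : List ℕ) : List ℕ := w.dropLast ++ [1]

/-- `Θ` flips the outer digits of every consecutive triple
(000↦101, 001↦100, 100↦001, 101↦000). -/
def thetaBlock (w : List ℕ) : List ℕ :=
  w.mapIdx fun i x => if i % 3 = 1 then x else 1 - x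

/-- `tB n` is the block `t_{n+1}`: `t_1 = 100`, `t_{n+1} = t_n⁺ Θ(t_n⁺)`. -/
def tB : ℕ → List ℕ
  | 0 => [1, 0, 0]
  | n + 1 => plusBlock (tB n) ++ thetaBlock (plusBlock (tB n))

/-- The sequence `u w^∞` (the block `u` followed by `w` repeated forever). -/
def prefixPeriodic (u w : List ℕ) : ℕ → ℕ := fun i =>
  if i < u.length then u.getD i 0 else w.getD ((i - u.length) % w.length) 0

/-- The periodic sequence `w^∞`. -/
def periodicSeq (w : List ℕ) : ℕ → ℕ := fun i => w.getD (i % w.length) 0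

/-- The componentwise limit `λ = 101001000101…` of the blocks `t_n`
(the digit `λ_{i+1}` has stabilized in `t_{i+2} = tB (i+1)`). -/
def lamSeq : ℕ → ℕ := fun i => (tB (i + 1)).getD i 0

/-- `β_c` is the unique base in (1,2] with `∑ λ_i β^{-i} = 1`. -/
def IsBetaC (β : ℝ) : Prop := β ∈ Set.Ioc (1 : ℝ) 2 ∧ SumsToOne β lamSeq

/-- The sequence `t_{n+2}⁺ (Θ(t_{n+2}))^∞`, the quasi-greedy expansion of 1 for `β̂_n`. -/
def hatSeq (n : ℕ) : ℕ → ℕ :=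
  prefixPeriodic (plusBlock (tB (n + 1))) (thetaBlock (tB (n + 1)))

/-- The Sharkovskii ordering `k ⊳ ℓ` on positive integers. -/
def Sharkovskii (k l : ℕ) : Prop :=
  ∃ a b c d : ℕ, k = 2 ^ a * (2 * b + 1) ∧ l = 2 ^ c * (2 * d + 1) ∧ k ≠ l ∧
    ((1 ≤ b ∧ d = 0) ∨ (1 ≤ b ∧ 1 ≤ d ∧ (a < c ∨ (a = c ∧ b < d))) ∨
      (b = 0 ∧ d = 0 ∧ c < a))

/-- The digit set Ω as pairs of naturals (for combinatorial statements). -/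
def OmegaD : Set (ℕ × ℕ) := {(0, 0), (1, 0), (0, 1)}

/-- The periodic extension `(d_1 … d_k)^∞` of a block. -/
def cyc (d : List (ℕ × ℕ)) : ℕ → ℕ × ℕ := fun i => d.getD (i % d.length) (0, 0)

/-- Strict lexicographic order on lists. -/
def listLT (u v : List ℕ) : Prop := List.Lex (· < ·) u v

/-- Weak lexicographic order on lists. -/
def listLE (u v : List ℕ) : Prop := listLT u v ∨ u = v

/-- The first components `d_1¹ … d_k¹` of a block over Ω. -/
def comp1 (d : List (ℕ × ℕ)) : List ℕ := d.map Prod.fst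

/-- The second components `d_1² … d_k²` of a block over Ω. -/
def comp2 (d : List (ℕ × ℕ)) : List ℕ := d.map Prod.snd

/-- The digits `(1 - d_1⁺) … (1 - d_k⁺)` where `d⁺ = d¹ + d²`. -/
def comp3 (d : List (ℕ × ℕ)) : List ℕ := d.map fun x => 1 - x.1 - x.2

/-- Cyclic shift of a list by `j`. -/
def rot {α : Type*} (j : ℕ) (l : List α) : List α := l.drop j ++ l.take j

/-- `d` is a representation of the binary block `a`. -/
def IsRepresentation (a : List ℕ) (d : List (ℕ × ℕ)) : Prop :=
  d.length = a.length ∧ (∀ x ∈ d, x ∈ OmegaD) ∧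
  SmallestPeriod (cyc d) a.length ∧
  comp1 d = a ∧ listLE (comp3 d) (comp2 d) ∧ listLE (comp2 d) a ∧
  ∀ j < a.length,
    listLE (comp1 (rot j d)) a ∧ listLE (comp2 (rot j d)) a ∧ listLE (comp3 (rot j d)) a

/-- A binary block is admissible if it has a representation. -/
def IsAdmissible (a : List ℕ) : Prop := ∃ d, IsRepresentation a d

/-- The `i`-th consecutive triple of a block (0-indexed). -/
def tripleAt (a : List ℕ) (i : ℕ) : List ℕ :=
  [a.getD (3 * i) 0, a.getD (3 * i + 1) 0, a.getD (3 * i + 2) 0]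

/-- The edges of the directed graph on {000, 001, 100, 101} defining the subshift `X`. -/
def XEdge (u v : List ℕ) : Prop :=
  (u, v) ∈ ({([1,0,1], [0,0,1]), ([1,0,1], [0,0,0]), ([0,0,1], [0,0,0]),
             ([0,0,0], [1,0,1]), ([0,0,0], [1,0,0]), ([1,0,0], [1,0,1])} :
      Set (List ℕ × List ℕ))



/-- Value of a real digit sequence in base `β`. -/
def V (β : ℝ) (f : ℕ → ℝ) : ℝ := ∑' i : ℕ, f i * (β ^ (i + 1))⁻¹

/-- 0-1 valued real sequences. -/
def Bin (f : ℕ → ℝ) : Prop := ∀ i, f i = 0 ∨ f i = 1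

theorem Bin.nonneg {f : ℕ → ℝ} (h : Bin f) (i : ℕ) : 0 ≤ f i := by
  rcases h i with h | h <;> simp [h]

theorem Bin.le_one {f : ℕ → ℝ} (h : Bin f) (i : ℕ) : f i ≤ 1 := by
  rcases h i with h | h <;> simp [h]

theorem hasSum_geom {β : ℝ} (hβ : 1 < β) :
    HasSum (fun i : ℕ => (β ^ (i + 1))⁻¹) (1 / (β - 1)) := by
  have h0 : 0 < β := by linarith
  have h := (hasSum_geometric_of_lt_one (r := β⁻¹) (by positivity)
    (inv_lt_one_of_one_lt₀ hβ)).mul_left β⁻¹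
  have h3 : 1 - β⁻¹ ≠ 0 := by
    have := inv_lt_one_of_one_lt₀ hβ
    linarith
  have h4 : β - 1 ≠ 0 := by linarith
  have e1 : (fun i : ℕ => (β ^ (i + 1))⁻¹) = fun i => β⁻¹ * β⁻¹ ^ i := by
    funext i
    rw [pow_succ, mul_inv, inv_pow, mul_comm]
  have e2 : 1 / (β - 1) = β⁻¹ * (1 - β⁻¹)⁻¹ := by
    field_simp
  rw [e1, e2]
  exact h

theorem summ {β : ℝ} (hβ : 1 < β) {f : ℕ → ℝ} (hf : Bin f) :
    Summable (fun i : ℕ => f i * (β ^ (i + 1))⁻¹) := by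
  have h0 : 0 < β := by linarith
  refine Summable.of_nonneg_of_le (fun i => ?_) (fun i => ?_) (hasSum_geom hβ).summable
  · exact mul_nonneg (hf.nonneg i) (by positivity)
  · exact mul_le_of_le_one_left (by positivity) (hf.le_one i)

theorem V_nonneg {β : ℝ} (hβ : 1 < β) {f : ℕ → ℝ} (hf : Bin f) : 0 ≤ V β f := by
  have h0 : 0 < β := by linarith
  exact tsum_nonneg fun i => mul_nonneg (hf.nonneg i) (by positivity)

theorem V_pos {β : ℝ} (hβ : 1 < β) {f : ℕ → ℝ} (hf : Bin f) (m : ℕ) (hm : f m = 1) :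
    0 < V β f := by
  have h0 : 0 < β := by linarith
  refine (summ hβ hf).tsum_pos (fun i => mul_nonneg (hf.nonneg i) (by positivity)) m ?_
  rw [hm]; positivity

theorem V_anti {β γ : ℝ} (hβ : 1 < β) (h : β ≤ γ) {f : ℕ → ℝ} (hf : Bin f) :
    V γ f ≤ V β f := by
  have h0 : 0 < β := by linarith
  refine Summable.tsum_le_tsum (fun i => ?_) (summ (by linarith) hf) (summ hβ hf)
  refine mul_le_mul_of_nonneg_left ?_ (hf.nonneg i)
  gcongr

theorem V_split {β : ℝ} (hβ : 1 < β) {f : ℕ → ℝ} (hf : Bin f) (n : ℕ) :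
    V β f = ∑ i ∈ Finset.range n, f i * (β ^ (i + 1))⁻¹ +
      (β ^ n)⁻¹ * V β (fun i => f (n + i)) := by
  unfold V
  rw [← (summ hβ hf).sum_add_tsum_nat_add n, ← tsum_mul_left]
  congr 1
  refine tsum_congr fun i => ?_
  rw [show i + n + 1 = n + (i + 1) by ring, pow_add, mul_inv, add_comm i n]
  ring

theorem V_succ {β : ℝ} (hβ : 1 < β) {f : ℕ → ℝ} (hf : Bin f) :
    β * V β f = f 0 + V β (fun i => f (1 + i)) := by
  have h0 : 0 < β := by linarith
  rw [V_split hβ hf 1]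
  simp
  field_simp

theorem V_two {f : ℕ → ℝ} (hf : Bin f) (m : ℕ) (hm : f m = 0) : V 2 f < 1 := by
  have hg : Bin (fun i => 1 - f i) := fun i => by
    rcases hf i with h | h <;> simp [h]
  have h1 := V_pos (β := 2) (by norm_num) hg m (by simp [hm])
  have h2 : V 2 f + V 2 (fun i => 1 - f i) = 1 := by
    unfold V
    rw [← (summ (by norm_num) hf).tsum_add (summ (by norm_num) hg)]
    have := (hasSum_geom (β := 2) (by norm_num)).tsum_eq
    norm_num at this
    refine Eq.trans (tsum_congr fun i => ?_) this
    ring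
  linarith

theorem V_cont {β : ℝ} (hβ : 1 < β) {f : ℕ → ℝ} (hf : Bin f) :
    ContinuousAt (fun γ => V γ f) β := by
  obtain ⟨r, hr1, hr⟩ := exists_between hβ
  have : ContinuousOn (fun γ => V γ f) (Set.Ici r) := by
    unfold V
    refine continuousOn_tsum (u := fun i => (r ^ (i + 1))⁻¹) (fun i => ?_)
      (hasSum_geom hr1).summable (fun i x hx => ?_)
    · refine ContinuousOn.mul continuousOn_const (ContinuousOn.inv₀ (by fun_prop) ?_)
      intro x hx
      have : r ≤ x := hx
      have : 0 < x := by linarith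
      positivity
    · have h1 : r ≤ x := hx
      have h0 : 0 < r := by linarith
      have h2 : 0 < x := by linarith
      rw [Real.norm_of_nonneg (mul_nonneg (hf.nonneg i) (by positivity))]
      refine (mul_le_of_le_one_left (by positivity) (hf.le_one i)).trans ?_
      gcongr
  exact this.continuousAt (Ici_mem_nhds hr)

/-- The three digits. -/
def e : Fin 3 → ℝ × ℝ := ![(1, 0), (0, 1), (0, 0)]

/-- The three binary components of a digit. -/
def p : Fin 3 → ℝ × ℝ → ℝ := ![fun x => x.1, fun x => x.2, fun x => 1 - x.1 - x.2]

/-- The barycentric-type coordinates of a point. -/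
def q (β : ℝ) : Fin 3 → ℝ × ℝ → ℝ :=
  ![fun x => x.1, fun x => x.2, fun x => 1 / (β - 1) - x.1 - x.2]

theorem mem_OmegaR {x : ℝ × ℝ} : x ∈ OmegaR ↔ ∃ c, x = e c := by
  simp [OmegaR, e, Fin.exists_fin_succ]
  tauto

theorem p_e (c c' : Fin 3) : p c (e c') = if c = c' then 1 else 0 := by
  fin_cases c <;> fin_cases c' <;> simp [p, e]

theorem e_inj {c c' : Fin 3} (h : e c = e c') : c = c' := by
  by_contra hne
  have := p_e c c'
  rw [← h, p_e] at this
  simp [hne] at this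

theorem bin_p {d : ℕ → ℝ × ℝ} (hd : ∀ i, d i ∈ OmegaR) (c : Fin 3) :
    Bin (fun i => p c (d i)) := by
  intro i
  obtain ⟨c', h⟩ := mem_OmegaR.1 (hd i)
  simp only [h, p_e]
  split_ifs <;> simp

theorem q_sum {β : ℝ} (hβ : 1 < β) {d : ℕ → ℝ × ℝ} (hd : ∀ i, d i ∈ OmegaR) (c : Fin 3) :
    q β c (∑' i : ℕ, (β ^ (i + 1))⁻¹ • d i) = V β (fun i => p c (d i)) := by
  have h0 := summ hβ (bin_p hd 0)
  have h1 := summ hβ (bin_p hd 1)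
  have hs : HasSum (fun i : ℕ => (β ^ (i + 1))⁻¹ • d i)
      (V β (fun i => p 0 (d i)), V β (fun i => p 1 (d i))) := by
    have h2 := h0.hasSum.prodMk h1.hasSum
    have e1 : (fun i : ℕ => (β ^ (i + 1))⁻¹ • d i) =
        fun i => (p 0 (d i) * (β ^ (i + 1))⁻¹, p 1 (d i) * (β ^ (i + 1))⁻¹) := by
      funext i
      ext <;> simp [p, mul_comm]
    rw [e1]
    exact h2
  rw [hs.tsum_eq]
  fin_cases c
  · simp [q]
  · simp [q]
  · have h2 := ((hasSum_geom hβ).sub h0.hasSum).sub h1.hasSum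
    have h3 : V β (fun i => p 2 (d i)) = 1 / (β - 1) - V β (fun i => p 0 (d i)) -
        V β (fun i => p 1 (d i)) := by
      refine Eq.trans ?_ h2.tsum_eq
      unfold V
      refine tsum_congr fun i => ?_
      simp [p]; ring
    exact h3.symm

theorem const_sum {β : ℝ} (hβ : 1 < β) (c c' : Fin 3) :
    V β (fun _ => p c (e c')) = if c = c' then 1 / (β - 1) else 0 := by
  unfold V
  rw [p_e]
  split_ifs
  · simpa using (hasSum_geom hβ).tsum_eq
  · simp

theorem q_ext {β : ℝ} {x y : ℝ × ℝ} (h : ∀ c, q β c x = q β c y) : x = y := by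
  have h0 := h 0
  have h1 := h 1
  simp [q] at h0 h1
  ext <;> assumption

theorem vert_mem {β : ℝ} (hβ : 1 < β) (c : Fin 3) : (1 / (β - 1)) • e c ∈ Sfat β := by
  refine ⟨fun _ => e c, fun _ => mem_OmegaR.2 ⟨c, rfl⟩, ?_⟩
  apply q_ext (β := β)
  intro c'
  rw [q_sum hβ (fun _ => mem_OmegaR.2 ⟨c, rfl⟩), const_sum hβ]
  fin_cases c <;> fin_cases c' <;> simp [q, e]

theorem mem_Delta {β : ℝ} (hβ : 1 < β) (x : ℝ × ℝ) : x ∈ Delta β ↔ ∀ c, 0 ≤ q β c x := by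
  constructor
  · have hc : Convex ℝ {x : ℝ × ℝ | ∀ c, 0 ≤ q β c x} := by
      intro x hx y hy a b ha hb hab
      intro c
      have h1 := mul_nonneg ha (hx c)
      have h2 := mul_nonneg hb (hy c)
      refine (add_nonneg h1 h2).trans_eq ?_
      obtain rfl : b = 1 - a := by linarith
      fin_cases c <;> simp [q]
      ring
    intro h
    refine convexHull_min ?_ hc h
    rintro _ ⟨d, hd, rfl⟩ c
    rw [q_sum hβ hd]
    exact V_nonneg hβ (bin_p hd c)
  · intro h
    have hb : 0 < β - 1 := by linarith
    have hv : ∀ c ∈ Finset.univ, (1 / (β - 1)) • e c ∈ Delta β :=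
      fun c _ => subset_convexHull ℝ _ (vert_mem hβ c)
    have := (convex_convexHull ℝ (Sfat β)).sum_mem (t := Finset.univ)
      (w := fun c => (β - 1) * q β c x) (fun c _ => mul_nonneg hb.le (h c))
      (by simp [Fin.sum_univ_succ, q]; field_simp; ring) hv
    have hx : ∑ c : Fin 3, ((β - 1) * q β c x) • ((1 / (β - 1)) • e c) = x := by
      ext <;> simp [Fin.sum_univ_succ, q, e] <;> field_simp
    rw [hx] at this
    exact this

theorem mem_fmap {β : ℝ} (hβ : 1 < β) (c : Fin 3) (x : ℝ × ℝ) :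
    x ∈ fmap β (e c) '' Delta β ↔ ∀ c', (if c' = c then 1 else 0) ≤ β * q β c' x := by
  have h0 : β ≠ 0 := by linarith
  have h1 : β - 1 ≠ 0 := by linarith
  have key : ∀ c', q β c' (β • x - e c) = β * q β c' x - (if c' = c then 1 else 0) := by
    intro c'
    fin_cases c <;> fin_cases c' <;> simp [q, e] <;> field_simp <;> ring
  constructor
  · rintro ⟨y, hy, rfl⟩ c'
    have hy' := (mem_Delta hβ y).1 hy c'
    have : y = β • fmap β (e c) y - e c := by
      simp [fmap, smul_smul, h0]
    rw [this] at hy'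
    rw [key] at hy'
    linarith
  · intro h
    refine ⟨β • x - e c, (mem_Delta hβ _).2 fun c' => ?_, ?_⟩
    · rw [key]
      linarith [h c']
    · simp [fmap, smul_smul, h0]

theorem mem_Ufat {β : ℝ} (hβ : 1 < β) {d : ℕ → ℝ × ℝ} (hd : ∀ i, d i ∈ OmegaR) :
    d ∈ Ufat β ↔ ∀ (c : Fin 3) (n : ℕ), p c (d n) = 0 →
      V β (fun i => p c (d (n + 1 + i))) < 1 := by
  have hs : ∀ c n, β * V β (fun i => p c (d (n + i))) =
      p c (d n) + V β (fun i => p c (d (n + 1 + i))) := by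
    intro c n
    have := V_succ hβ (bin_p (d := fun i => d (n + i)) (fun i => hd _) c)
    simpa [add_assoc] using this
  have hn : ∀ c n, 0 ≤ V β (fun i => p c (d (n + i))) := fun c n =>
    V_nonneg hβ (bin_p (d := fun i => d (n + i)) (fun i => hd _) c)
  have hm : ∀ n c, (∑' i : ℕ, (β ^ (i + 1))⁻¹ • d (n + i)) ∈ fmap β (e c) '' Delta β ↔
      1 ≤ β * V β (fun i => p c (d (n + i))) := by
    intro n c
    rw [mem_fmap hβ]
    have hq : ∀ c', q β c' (∑' i : ℕ, (β ^ (i + 1))⁻¹ • d (n + i)) =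
        V β (fun i => p c' (d (n + i))) :=
      fun c' => q_sum hβ (d := fun i => d (n + i)) (fun i => hd _) c'
    simp only [hq]
    constructor
    · intro h
      simpa using h c
    · intro h c'
      split_ifs with hc
      · rwa [hc]
      · exact mul_nonneg (by linarith) (hn c' n)
  constructor
  · rintro ⟨-, h⟩ c n h0
    by_contra hlt
    push Not at hlt
    obtain ⟨c', hc'⟩ := mem_OmegaR.1 (hd n)
    apply h n
    have hne : c ≠ c' := by
      rintro rfl
      rw [hc', p_e] at h0
      simp at h0
    simp only [Ofat, Set.mem_iUnion]
    refine ⟨e c, mem_OmegaR.2 ⟨c, rfl⟩, e c', mem_OmegaR.2 ⟨c', rfl⟩,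
      fun hh => hne (e_inj hh), (hm n c).2 ?_, (hm n c').2 ?_⟩
    · rw [hs, h0]; linarith
    · rw [hs, hc', p_e]
      have := hn c' (n + 1)
      simp only [if_true]
      linarith
  · intro h
    refine ⟨hd, fun n hO => ?_⟩
    simp only [Ofat, Set.mem_iUnion] at hO
    obtain ⟨x, hx, y, hy, hne, h1, h2⟩ := hO
    obtain ⟨c, rfl⟩ := mem_OmegaR.1 hx
    obtain ⟨c', rfl⟩ := mem_OmegaR.1 hy
    obtain ⟨c₀, h₀⟩ := mem_OmegaR.1 (hd n)
    have key : ∀ c, (∑' i : ℕ, (β ^ (i + 1))⁻¹ • d (n + i)) ∈ fmap β (e c) '' Delta β →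
        c = c₀ := by
      intro c h1
      by_contra hcc
      have h3 : p c (d n) = 0 := by rw [h₀, p_e]; simp [hcc]
      have h4 := (hm n c).1 h1
      rw [hs, h3] at h4
      linarith [h c n h3]
    exact hne (by rw [key c h1, key c' h2])

theorem Ufat_mono {β γ : ℝ} (hβ : 1 < β) (h : β ≤ γ) {d : ℕ → ℝ × ℝ} (hd : d ∈ Ufat β) :
    d ∈ Ufat γ := by
  have hd' := hd.1
  rw [mem_Ufat hβ hd'] at hd
  rw [mem_Ufat (by linarith) hd']
  intro c n h0
  exact (V_anti hβ h (bin_p (d := fun i => d (n + 1 + i)) (fun i => hd' _) c)).trans_lt (hd c n h0)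

theorem per_mod {d : ℕ → ℝ × ℝ} {k : ℕ} (hp : ∀ i, d (i + k) = d i) (n i : ℕ) :
    d (n % k + i) = d (n + i) := by
  have hp' : Function.Periodic d k := hp
  rw [← hp'.map_mod_nat (n % k + i), ← hp'.map_mod_nat (n + i), Nat.mod_add_mod]

theorem Ufat_open {β : ℝ} (hβ : 1 < β) {d : ℕ → ℝ × ℝ} {k : ℕ} (hk : 0 < k)
    (hp : ∀ i, d (i + k) = d i) (hd : d ∈ Ufat β) : ∀ᶠ γ in nhds β, d ∈ Ufat γ := by
  have hd' := hd.1
  rw [mem_Ufat hβ hd'] at hd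
  have h1 : ∀ᶠ γ in nhds β, ∀ c : Fin 3, ∀ n ∈ Set.Iio k, p c (d n) = 0 →
      V γ (fun i => p c (d (n + 1 + i))) < 1 := by
    rw [Filter.eventually_all]
    intro c
    rw [Filter.eventually_all_finite (Set.finite_Iio k)]
    intro n _
    by_cases h0 : p c (d n) = 0
    · have := (V_cont hβ (bin_p (d := fun i => d (n + 1 + i)) (fun i => hd' _) c)).eventually_lt
        continuousAt_const (hd c n h0)
      filter_upwards [this] with γ hγ _ using hγ
    · exact Filter.Eventually.of_forall fun γ h => absurd h h0
  filter_upwards [h1, lt_mem_nhds hβ] with γ hγ h1γ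
  rw [mem_Ufat h1γ hd']
  intro c n h0
  have h2 := hγ c (n % k) (Nat.mod_lt _ hk)
  have h3 := per_mod hp n 0
  simp only [add_zero] at h3
  rw [h3] at h2
  simp only [add_assoc, per_mod hp n] at h2
  simp only [add_assoc]
  exact h2 h0

theorem Ufat_two {d : ℕ → ℝ × ℝ} {k : ℕ} (hk : 0 < k) (hd : ∀ i, d i ∈ OmegaR)
    (hp : ∀ i, d (i + k) = d i) : d ∈ Ufat 2 := by
  rw [mem_Ufat (by norm_num) hd]
  intro c n h0
  refine V_two (bin_p (d := fun i => d (n + 1 + i)) (fun i => hd _) c) (k - 1) ?_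
  rw [show n + 1 + (k - 1) = n + k by omega, hp, h0]

theorem exists_per (k : ℕ) (hk : 1 ≤ k) :
    ∃ d : ℕ → ℝ × ℝ, (∀ i, d i ∈ OmegaR) ∧ SmallestPeriod d k := by
  refine ⟨fun i => if k ∣ i then (1, 0) else (0, 0), fun i => ?_, hk, fun i => ?_,
    fun j hj hjk => ⟨0, ?_⟩⟩
  · dsimp only
    split_ifs <;> simp [OmegaR]
  · simp
  · have : ¬ k ∣ 0 + j := by
      rw [zero_add]
      exact Nat.not_dvd_of_pos_of_lt hj hjk
    simp only [this]
    simp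

theorem fin_per (k : ℕ) (hk : 0 < k) :
    {d : ℕ → ℝ × ℝ | (∀ i, d i ∈ OmegaR) ∧ ∀ i, d (i + k) = d i}.Finite := by
  have : Set.Finite (Set.range fun (g : Fin k → Fin 3) (i : ℕ) => e (g ⟨i % k, Nat.mod_lt _ hk⟩)) :=
    Set.finite_range _
  refine this.subset ?_
  rintro d ⟨hd, hp⟩
  choose g hg using fun i => mem_OmegaR.1 (hd i)
  refine ⟨fun i => g i, ?_⟩
  funext i
  have h3 := per_mod hp i 0
  simp only [add_zero] at h3
  simp only [← hg, h3]

/-- (a) The set of bases β ∈ (1,2] for which 𝐔_β contains a sequence of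
smallest period k is exactly (β_k, 2]; (b) for k ≥ 2 the quasi-greedy
β_k-expansion of 1 is periodic with period k. -/
theorem stmt15 (k : ℕ) (hk : 1 ≤ k) :
    ({β : ℝ | β ∈ Set.Ioc (1 : ℝ) 2 ∧
        ∃ d ∈ FatSierpinski.Ufat β, FatSierpinski.SmallestPeriod d k} =
      Set.Ioc (FatSierpinski.betaK k) 2) ∧
    (2 ≤ k → ∀ a : ℕ → ℕ, FatSierpinski.IsQuasiGreedy (FatSierpinski.betaK k) a →
      ∀ i, a (i + k) = a i) := by
  set T := {β : ℝ | β ∈ Set.Ioc (1 : ℝ) 2 ∧ ∃ d ∈ Ufat β, SmallestPeriod d k} with hT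
  have h2T : (2 : ℝ) ∈ T := by
    obtain ⟨d, hd, hp⟩ := exists_per k hk
    exact ⟨⟨by norm_num, le_rfl⟩, d, Ufat_two hk hd hp.2.1, hp⟩
  have hbdd : BddBelow T := ⟨1, fun x hx => hx.1.1.le⟩
  have hb : betaK k = sInf T := rfl
  have hle : ∀ x ∈ T, betaK k ≤ x := fun x hx => csInf_le hbdd hx
  have hA : T = Set.Ioc (betaK k) 2 := by
    ext β
    constructor
    · intro h
      refine ⟨lt_of_le_of_ne (hle β h) ?_, h.1.2⟩
      rintro heq
      obtain ⟨⟨h1, h2⟩, d, hd, hp⟩ := h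
      have ho := Ufat_open h1 hk hp.2.1 hd
      have hl : ∀ᶠ γ in nhdsWithin β (Set.Iio β), d ∈ Ufat γ ∧ 1 < γ ∧ γ < β := by
        filter_upwards [nhdsWithin_le_nhds ho, nhdsWithin_le_nhds (lt_mem_nhds h1),
          self_mem_nhdsWithin] with γ a b c using ⟨a, b, c⟩
      obtain ⟨γ, hγ, hγ1, hγ2⟩ := hl.exists
      have := hle γ ⟨⟨hγ1, by linarith⟩, d, hγ, hp⟩
      linarith
    · rintro ⟨h1, h2⟩
      obtain ⟨t, ht, htβ⟩ := exists_lt_of_csInf_lt ⟨2, h2T⟩ (hb ▸ h1)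
      obtain ⟨⟨ht1, ht2⟩, d, hd, hp⟩ := ht
      exact ⟨⟨by linarith, h2⟩, d, Ufat_mono ht1 htβ.le hd, hp⟩
  refine ⟨hA, fun _ a ha => ?_⟩
  have hlt2 : betaK k < 2 := (hA ▸ h2T : (2 : ℝ) ∈ Set.Ioc (betaK k) 2).1
  have hge1 : 1 ≤ betaK k := le_csInf ⟨2, h2T⟩ fun x hx => hx.1.1.le
  obtain ⟨ab, anz, asum, amax⟩ := ha
  set B := betaK k with hB
  have hB1 : 1 < B := by
    refine lt_of_le_of_ne hge1 fun h1 => ?_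
    rw [SumsToOne, ← h1] at asum
    simp only [one_pow, div_one] at asum
    have hsum : Summable (fun i => (a i : ℝ)) := by
      by_contra hns
      rw [tsum_eq_zero_of_not_summable hns] at asum
      norm_num at asum
    have ht := hsum.tendsto_atTop_zero
    obtain ⟨N, hN⟩ := Filter.eventually_atTop.1 (ht.eventually_lt_const (by norm_num : (0 : ℝ) < 1))
    obtain ⟨i, hi, hi0⟩ := anz N
    have h3 := hN i hi
    have h4 : a i < 1 := by exact_mod_cast h3
    omega
  obtain ⟨d, hdO, hdp, hdU⟩ : ∃ d : ℕ → ℝ × ℝ, (∀ i, d i ∈ OmegaR) ∧ SmallestPeriod d k ∧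
      ∀ γ, B < γ → d ∈ Ufat γ := by
    by_contra hcon
    push Not at hcon
    have hev : ∀ᶠ γ in nhdsWithin B (Set.Ioi B),
        ∀ d ∈ {d : ℕ → ℝ × ℝ | (∀ i, d i ∈ OmegaR) ∧ ∀ i, d (i + k) = d i},
          SmallestPeriod d k → d ∉ Ufat γ := by
      rw [Filter.eventually_all_finite (fin_per k hk)]
      rintro d ⟨hd, hp⟩
      by_cases hs : SmallestPeriod d k
      · obtain ⟨γ, hγ, hγd⟩ := hcon d hd hs
        filter_upwards [Ioo_mem_nhdsGT hγ] with x hx _ hxU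
        exact hγd (Ufat_mono (hB1.trans hx.1) hx.2.le hxU)
      · exact Filter.Eventually.of_forall fun _ h => absurd h hs
    obtain ⟨γ, hγ, hγ1, hγ2⟩ := (hev.and (Ioo_mem_nhdsGT hlt2)).exists
    have : γ ∈ T := by rw [hA]; exact ⟨hγ1, hγ2.le⟩
    obtain ⟨_, d, hd, hp⟩ := this
    exact hγ d ⟨hd.1, hp.2.1⟩ hp hd
  have hdn : d ∉ Ufat B := by
    intro h
    have : B ∈ T := ⟨⟨hB1, hlt2.le⟩, d, h, hdp⟩
    rw [hA] at this
    exact lt_irrefl _ this.1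
  have hle1 : ∀ (c : Fin 3) (n : ℕ), p c (d n) = 0 → V B (fun i => p c (d (n + 1 + i))) ≤ 1 := by
    intro c n h0
    have hc : Filter.Tendsto (fun γ => V γ (fun i => p c (d (n + 1 + i))))
        (nhdsWithin B (Set.Ioi B)) (nhds (V B (fun i => p c (d (n + 1 + i))))) :=
      (V_cont hB1 (bin_p (d := fun i => d (n + 1 + i)) (fun i => hdO _) c)).tendsto.mono_left
        nhdsWithin_le_nhds
    refine le_of_tendsto hc ?_
    filter_upwards [self_mem_nhdsWithin] with γ hγ
    have hγ' : B < γ := hγ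
    exact ((mem_Ufat (hB1.trans hγ') hdO).1 (hdU γ hγ') c n h0).le
  rw [mem_Ufat hB1 hdO] at hdn
  push Not at hdn
  obtain ⟨c, n, h0, h1⟩ := hdn
  have hV1 := le_antisymm (hle1 c n h0) h1
  have hpb := bin_p hdO c
  let b : ℕ → ℕ := fun i => if p c (d (n + 1 + i)) = 0 then 0 else 1
  have hbv : ∀ i, (b i : ℝ) = p c (d (n + 1 + i)) := by
    intro i
    rcases hpb (n + 1 + i) with h | h <;> simp only at h <;> simp [b, h]
  have hbper : ∀ i, b (i + k) = b i := by
    intro i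
    simp only [b, ← add_assoc, hdp.2.1]
  have hbperm : ∀ m i, b (i + m * k) = b i := by
    intro m
    induction m with
    | zero => simp
    | succ m ih => intro i; rw [add_mul, one_mul, ← add_assoc, hbper, ih]
  have hbB : IsBinary b := fun i => by simp only [b]; split_ifs <;> simp
  have hbS : SumsToOne B b := by
    unfold SumsToOne
    simp only [hbv, div_eq_mul_inv]
    exact hV1
  have hbN : NotEndInZeros b := by
    by_contra hcon
    unfold NotEndInZeros at hcon
    push Not at hcon
    obtain ⟨N, hN⟩ := hcon
    have hz : ∀ i, b i = 0 := by
      intro i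
      rw [← hbperm N i]
      exact hN _ (by nlinarith)
    unfold SumsToOne at hbS
    simp [hz] at hbS
  rcases amax b hbB hbN hbS with ⟨m, hm1, hm2⟩ | heq
  · exfalso
    have hm := ab m
    have hbm : b m = 0 := by omega
    have ham : a m = 1 := by omega
    have hfa : Bin (fun i => (a i : ℝ)) := fun i => by
      have := ab i
      have h5 : a i = 0 ∨ a i = 1 := by omega
      rcases h5 with h | h <;> simp [h]
    have hfb : Bin (fun i => (b i : ℝ)) := fun i => by
      have := hbB i
      have h5 : b i = 0 ∨ b i = 1 := by omega
      rcases h5 with h | h <;> simp [h]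
    have sa : V B (fun i => (a i : ℝ)) = 1 := by
      rw [← asum]; simp only [V, div_eq_mul_inv]
    have sb : V B (fun i => (b i : ℝ)) = 1 := by
      rw [← hbS]; simp only [V, div_eq_mul_inv]
    rw [V_split hB1 hfa (m + 1), Finset.sum_range_succ] at sa
    rw [V_split hB1 hfb (m + 1), Finset.sum_range_succ] at sb
    have hpre : ∑ i ∈ Finset.range m, (b i : ℝ) * (B ^ (i + 1))⁻¹ =
        ∑ i ∈ Finset.range m, (a i : ℝ) * (B ^ (i + 1))⁻¹ :=
      Finset.sum_congr rfl fun i hi => by rw [hm1 i (Finset.mem_range.1 hi)]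
    have hta : 0 < V B (fun i => (a (m + 1 + i) : ℝ)) := by
      obtain ⟨i, hi, hi0⟩ := anz (m + 1)
      refine V_pos hB1 (fun i => hfa (m + 1 + i)) (i - (m + 1)) ?_
      have := ab i
      rw [show m + 1 + (i - (m + 1)) = i by omega, show a i = 1 by omega]
      simp
    have htb : V B (fun i => (b (m + 1 + i) : ℝ)) ≤ 1 := by
      have h3 : p c (d (n + 1 + m)) = 0 := by rw [← hbv, hbm]; simp
      have := hle1 c (n + 1 + m) h3
      simp only [hbv]
      refine le_of_eq_of_le ?_ this
      simp only [add_assoc]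
    rw [hpre] at sb
    simp only [hbm, ham] at sa sb
    push_cast at sa sb
    have hpos : 0 < (B ^ (m + 1))⁻¹ := by
      have : 0 < B := by linarith
      positivity
    nlinarith [mul_pos hpos hta, mul_le_mul_of_nonneg_left htb hpos.le]
  · intro i
    rw [← heq]
    exact hbper i


end FatSierpinski
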